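/- arXiv:1603.01886 — 2 statements merged into one kernel-verified Lean document; each statement's English description precedes it below -/
import Mathlib

section
/- Let (l,r) be a nonempty open interval of ℝ (with −∞ ≤ l < r ≤ ∞), let s : (l,r) → ℝ be strictly increasing and continuously differentiable with s'(x) > 0 for all x, and assume lim_{x→l⁺} s(x) = 0 and lim_{x→r⁻} s(x) = 1 (so that 0 < s(x) < 1 on (l,r)). Fix y ∈ (l,r) and set u(z) := s(z)(1−s(y)) for z ≤ y and u(z) := s(y)(1−s(z)) for z ≥ y. Then for every x ∈ (l,r) the function z ↦ s'(z)/u(z)² is integrable on the compact interval with endpoints x and y, and the oriented integral r_s(x) := ∫_y^x s'(z)/u(z)² dz satisfies r_s(x) = (1−s(y))^{−2}·(1/s(y) − 1/s(x)) for x ≤ y and r_s(x) = s(y)^{−2}·(1/(1−s(x)) − 1/(1−s(y))) for x ≥ y. Consequently r_s(x) → −∞ as x → l⁺ and r_s(x) → +∞ as x → r⁻. -/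
open MeasureTheory Filter Set Topology

/-!
The function `u` is `s (z ∧ y) * (1 - s (z ∨ y))`, which is continuous and positive on `(l, r)`
because `0 < s < 1` there (`scale_pos`, `scale_lt_one`). Hence `s' / u ^ 2` is continuous on `(l, r)`,
and so integrable between `y` and any point `x` of it. On either side of `y` one factor of `u` is
constant, so `s' / u ^ 2` has the primitive `-(1 - s y)⁻² / s` to the left and
`(s y)⁻² / (1 - s)` to the right; the fundamental theorem of calculus gives the closed forms,
and these blow up at the ends since `s → 0⁺` at `l` and `1 - s → 0⁺` at `r`.
-/

/-- Points of `(l, b)` occur eventually as `x → l⁺` along the reals. -/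
lemma eventually_left {l b : EReal} (h : l < b) :
    ∀ᶠ x : ℝ in comap (fun x : ℝ => (x : EReal)) (𝓝[>] l), l < (x : EReal) ∧ (x : EReal) < b :=
  (Ioo_mem_nhdsGT h : Ioo l b ∈ 𝓝[>] l) |> preimage_mem_comap

/-- Points of `(b, r)` occur eventually as `x → r⁻` along the reals. -/
lemma eventually_right {b r : EReal} (h : b < r) :
    ∀ᶠ x : ℝ in comap (fun x : ℝ => (x : EReal)) (𝓝[<] r), b < (x : EReal) ∧ (x : EReal) < r :=
  (Ioo_mem_nhdsLT h : Ioo b r ∈ 𝓝[<] r) |> preimage_mem_comap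

lemma neBot_left {l r : EReal} (h : l < r) :
    (comap (fun x : ℝ => (x : EReal)) (𝓝[>] l)).NeBot := by
  refine comap_neBot fun t ht => ?_
  obtain ⟨b, hb, hbt⟩ := (mem_nhdsGT_iff_exists_Ioo_subset' h).1 ht
  obtain ⟨x, hx⟩ := EReal.lt_iff_exists_real_btwn.1 hb
  exact ⟨x, hbt hx⟩

lemma neBot_right {l r : EReal} (h : l < r) :
    (comap (fun x : ℝ => (x : EReal)) (𝓝[<] r)).NeBot := by
  refine comap_neBot fun t ht => ?_
  obtain ⟨b, hb, hbt⟩ := (mem_nhdsLT_iff_exists_Ioo_subset' h).1 ht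
  obtain ⟨x, hx⟩ := EReal.lt_iff_exists_real_btwn.1 hb
  exact ⟨x, hbt hx⟩

lemma scale_pos {l r : EReal} {s : ℝ → ℝ}
    (hmono : StrictMonoOn s {x : ℝ | l < (x : EReal) ∧ (x : EReal) < r})
    (hliml : Tendsto s (comap (fun x : ℝ => (x : EReal)) (𝓝[>] l)) (𝓝 0))
    {x : ℝ} (hlx : l < (x : EReal)) (hxr : (x : EReal) < r) : 0 < s x := by
  have := neBot_left hlx
  -- The limit only gives `0 ≤ s w`; strictness comes from an intermediate point `w < x`.
  obtain ⟨w, hlw, hwx⟩ := EReal.lt_iff_exists_real_btwn.1 hlx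
  have hw : 0 ≤ s w := by
    refine le_of_tendsto hliml ?_
    filter_upwards [eventually_left hlw] with z hz
    exact (hmono ⟨hz.1, hz.2.trans (hwx.trans hxr)⟩ ⟨hlw, hwx.trans hxr⟩
      (EReal.coe_lt_coe_iff.1 hz.2)).le
  exact hw.trans_lt (hmono ⟨hlw, hwx.trans hxr⟩ ⟨hlx, hxr⟩ (EReal.coe_lt_coe_iff.1 hwx))

lemma scale_lt_one {l r : EReal} {s : ℝ → ℝ}
    (hmono : StrictMonoOn s {x : ℝ | l < (x : EReal) ∧ (x : EReal) < r})
    (hlimr : Tendsto s (comap (fun x : ℝ => (x : EReal)) (𝓝[<] r)) (𝓝 1))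
    {x : ℝ} (hlx : l < (x : EReal)) (hxr : (x : EReal) < r) : s x < 1 := by
  have := neBot_right hxr
  obtain ⟨w, hxw, hwr⟩ := EReal.lt_iff_exists_real_btwn.1 hxr
  have hw : s w ≤ 1 := by
    refine ge_of_tendsto hlimr ?_
    filter_upwards [eventually_right hwr] with z hz
    exact (hmono ⟨hlx.trans hxw, hwr⟩ ⟨(hlx.trans hxw).trans hz.1, hz.2⟩
      (EReal.coe_lt_coe_iff.1 hz.1)).le
  exact (hmono ⟨hlx, hxr⟩ ⟨hlx.trans hxw, hwr⟩ (EReal.coe_lt_coe_iff.1 hxw)).trans_le hw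

/-- the scale function `r_s(x) = ∫_y^x s'(z)/u(z,y)² dz` of the recurrent
transform, in the case `s(l+) = 0`, `s(r−) = 1`, where `u(z,y) = s(z∧y)(1−s(z∨y))`. -/
theorem stmt_0 (l r : EReal) (hlr : l < r)
    (s s' u : ℝ → ℝ) (y : ℝ) (hy : l < (y : EReal) ∧ (y : EReal) < r)
    (hmono : StrictMonoOn s {x : ℝ | l < (x : EReal) ∧ (x : EReal) < r})
    (hderiv : ∀ x : ℝ, l < (x : EReal) → (x : EReal) < r → HasDerivAt s (s' x) x)
    (hs'cont : ContinuousOn s' {x : ℝ | l < (x : EReal) ∧ (x : EReal) < r})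
    (hs'pos : ∀ x : ℝ, l < (x : EReal) → (x : EReal) < r → 0 < s' x)
    (hliml : Tendsto s (Filter.comap (fun x : ℝ => (x : EReal)) (𝓝[>] l)) (𝓝 0))
    (hlimr : Tendsto s (Filter.comap (fun x : ℝ => (x : EReal)) (𝓝[<] r)) (𝓝 1))
    (hu : ∀ z : ℝ, u z = if z ≤ y then s z * (1 - s y) else s y * (1 - s z)) :
    (∀ x : ℝ, l < (x : EReal) → (x : EReal) < r →
      IntervalIntegrable (fun z => s' z / (u z) ^ 2) volume y x) ∧
    (∀ x : ℝ, l < (x : EReal) → (x : EReal) < r → x ≤ y →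
      ∫ z in y..x, s' z / (u z) ^ 2 = ((1 - s y) ^ 2)⁻¹ * (1 / s y - 1 / s x)) ∧
    (∀ x : ℝ, l < (x : EReal) → (x : EReal) < r → y ≤ x →
      ∫ z in y..x, s' z / (u z) ^ 2 = ((s y) ^ 2)⁻¹ * (1 / (1 - s x) - 1 / (1 - s y))) ∧
    Tendsto (fun x : ℝ => ∫ z in y..x, s' z / (u z) ^ 2)
      (Filter.comap (fun x : ℝ => (x : EReal)) (𝓝[>] l)) atBot ∧
    Tendsto (fun x : ℝ => ∫ z in y..x, s' z / (u z) ^ 2)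
      (Filter.comap (fun x : ℝ => (x : EReal)) (𝓝[<] r)) atTop := by
  have pos : ∀ x : ℝ, l < (x : EReal) → (x : EReal) < r → 0 < s x :=
    fun x h1 h2 => scale_pos hmono hliml h1 h2
  have lt1 : ∀ x : ℝ, l < (x : EReal) → (x : EReal) < r → 0 < 1 - s x :=
    fun x h1 h2 => sub_pos.2 (scale_lt_one hmono hlimr h1 h2)
  have hsy := pos y hy.1 hy.2
  have hsy1 := lt1 y hy.1 hy.2
  have between : ∀ x : ℝ, l < (x : EReal) → (x : EReal) < r → ∀ z ∈ uIcc y x,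
      l < (z : EReal) ∧ (z : EReal) < r := by
    intro x h1 h2 z hz
    rcases mem_uIcc.1 hz with h | h
    · exact ⟨hy.1.trans_le (EReal.coe_le_coe_iff.2 h.1),
        (EReal.coe_le_coe_iff.2 h.2).trans_lt h2⟩
    · exact ⟨h1.trans_le (EReal.coe_le_coe_iff.2 h.1),
        (EReal.coe_le_coe_iff.2 h.2).trans_lt hy.2⟩
  have hscont : ContinuousOn s {x : ℝ | l < (x : EReal) ∧ (x : EReal) < r} :=
    fun x hx => (hderiv x hx.1 hx.2).continuousAt.continuousWithinAt
  have hmin : ∀ z : ℝ, l < (z : EReal) ∧ (z : EReal) < r →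
      l < ((min z y : ℝ) : EReal) ∧ ((min z y : ℝ) : EReal) < r := by
    intro z hz
    rcases min_choice z y with h | h <;> rw [h] <;> assumption
  have hmax : ∀ z : ℝ, l < (z : EReal) ∧ (z : EReal) < r →
      l < ((max z y : ℝ) : EReal) ∧ ((max z y : ℝ) : EReal) < r := by
    intro z hz
    rcases max_choice z y with h | h <;> rw [h] <;> assumption
  have hu' : u = fun z => s (min z y) * (1 - s (max z y)) := by
    funext z
    rw [hu z]
    split_ifs with h
    · rw [min_eq_left h, max_eq_right h]
    · rw [min_eq_right (not_le.1 h).le, max_eq_left (not_le.1 h).le]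
  have hucont : ContinuousOn u {x : ℝ | l < (x : EReal) ∧ (x : EReal) < r} := by
    rw [hu']
    exact (hscont.comp (by fun_prop) hmin).mul
      (continuousOn_const.sub (hscont.comp (by fun_prop) hmax))
  have hune : ∀ z : ℝ, l < (z : EReal) ∧ (z : EReal) < r → u z ^ 2 ≠ 0 := by
    intro z hz
    rw [hu']
    exact pow_ne_zero 2 (mul_pos (pos _ (hmin z hz).1 (hmin z hz).2)
      (lt1 _ (hmax z hz).1 (hmax z hz).2)).ne'
  have hint : ∀ x : ℝ, l < (x : EReal) → (x : EReal) < r →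
      IntervalIntegrable (fun z => s' z / (u z) ^ 2) volume y x := fun x h1 h2 =>
    ((hs'cont.div (hucont.pow 2) hune).mono (between x h1 h2)).intervalIntegrable
  have hleft : ∀ x : ℝ, l < (x : EReal) → (x : EReal) < r → x ≤ y →
      ∫ z in y..x, s' z / (u z) ^ 2 = ((1 - s y) ^ 2)⁻¹ * (1 / s y - 1 / s x) := by
    intro x h1 h2 hxy
    rw [intervalIntegral.integral_eq_sub_of_hasDerivAt
      (f := fun z => ((1 - s y) ^ 2)⁻¹ * (-(s z)⁻¹)) _ (hint x h1 h2)]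
    · simp only [one_div]
      ring
    · intro z hz
      obtain ⟨hz1, hz2⟩ := between x h1 h2 z hz
      rw [uIcc_of_ge hxy] at hz
      have hsz := (pos z hz1 hz2).ne'
      refine (((hderiv z hz1 hz2).fun_inv hsz).fun_neg.const_mul ((1 - s y) ^ 2)⁻¹).congr_deriv ?_
      rw [hu z, if_pos hz.2]
      have := hsy1.ne'
      field_simp
  have hright : ∀ x : ℝ, l < (x : EReal) → (x : EReal) < r → y ≤ x →
      ∫ z in y..x, s' z / (u z) ^ 2 =
        ((s y) ^ 2)⁻¹ * (1 / (1 - s x) - 1 / (1 - s y)) := by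
    intro x h1 h2 hxy
    rw [intervalIntegral.integral_eq_sub_of_hasDerivAt
      (f := fun z => ((s y) ^ 2)⁻¹ * (1 - s z)⁻¹) _ (hint x h1 h2)]
    · simp only [one_div]
      ring
    · intro z hz
      obtain ⟨hz1, hz2⟩ := between x h1 h2 z hz
      rw [uIcc_of_le hxy] at hz
      have hsz := (lt1 z hz1 hz2).ne'
      refine ((((hderiv z hz1 hz2).const_sub 1).fun_inv hsz).const_mul
        ((s y) ^ 2)⁻¹).congr_deriv ?_
      have huz : u z = s y * (1 - s z) := by
        simp only [hu', min_eq_right hz.1, max_eq_left hz.1]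
      rw [huz]
      have := hsy.ne'
      field_simp
  refine ⟨hint, hleft, hright, ?_, ?_⟩
  · have h0 : Tendsto s (comap (fun x : ℝ => (x : EReal)) (𝓝[>] l)) (𝓝[>] 0) := by
      refine tendsto_nhdsWithin_iff.2 ⟨hliml, ?_⟩
      filter_upwards [eventually_left hlr] with x hx using pos x hx.1 hx.2
    have h1 := (tendsto_neg_atTop_atBot.comp (tendsto_inv_nhdsGT_zero.comp h0))
    have h2 := (tendsto_atBot_add_const_left _ (1 / s y) h1).const_mul_atBot
      (show 0 < ((1 - s y) ^ 2)⁻¹ by positivity)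
    refine h2.congr' ?_
    filter_upwards [eventually_left hy.1] with x hx
    rw [hleft x hx.1 (hx.2.trans hy.2) (EReal.coe_lt_coe_iff.1 hx.2).le]
    simp [sub_eq_add_neg]
  · have h0 : Tendsto (fun x => 1 - s x)
        (comap (fun x : ℝ => (x : EReal)) (𝓝[<] r)) (𝓝[>] 0) := by
      refine tendsto_nhdsWithin_iff.2 ⟨by simpa using hlimr.const_sub 1, ?_⟩
      filter_upwards [eventually_right hlr] with x hx using lt1 x hx.1 hx.2
    have h1 := tendsto_inv_nhdsGT_zero.comp h0
    have h2 := (tendsto_atTop_add_const_right _ (-(1 / (1 - s y))) h1).const_mul_atTop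
      (show 0 < ((s y) ^ 2)⁻¹ by positivity)
    refine h2.congr' ?_
    filter_upwards [eventually_right hy.2] with x hx
    rw [hright x (hy.1.trans hx.1) hx.2 (EReal.coe_lt_coe_iff.1 hx.1).le]
    simp [sub_eq_add_neg]
end

section
/- Let −∞ ≤ l < y < ∞, let s : (l,y] → ℝ be continuous and strictly increasing, continuously differentiable on (l,y) with s' > 0 there, and let ρ : (l,y) → (0,∞) be Borel measurable with ∫_z^y ρ(u) du < ∞ for every z ∈ (l,y). Then for every z ∈ (l,y): (i) ∫_z^y [1/(s(y)−s(a)) − 1/(s(y)−s(z))]·(s(y)−s(a))²·ρ(a) da < ∞; and (ii) the Lebesgue integral over (z,y) of the nonnegative function a ↦ (∫_z^a (s(y)−s(u))² ρ(u) du)·s'(a)/(s(y)−s(a))² equals +∞. -/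
/-!
Write `g a = s y - s a`, which is positive and decreasing on `(l, y)` and tends to `0` at `y`.

The integrand in the first claim is at most `g a * ρ a ≤ g z * ρ a`, and `ρ` is integrable near `y`.

For the second claim, fix `c` strictly between `z` and `y`. The inner integral is, for `a ≥ c`, at
least `C = ∫ u in z..c, g u ^ 2 * ρ u > 0`, so the integrand dominates `C * s' a / g a ^ 2`, which is
`C` times the derivative of `1 / g`. As `1 / g` blows up at `y`, that derivative is not integrable
near `y`.
-/

open MeasureTheory Filter Set Topology

/-- Feller's integral test showing that `y` is an entrance boundary for the
Bessel-type diffusion on `(l,y)` with scale `s_l(x) = 1/(s(y)−s(x))` and speed measure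
`m_l(da) = (s(y)−s(a))² ρ(a) da`. -/
theorem stmt_3 (l : EReal) (y : ℝ) (hly : l < (y : EReal))
    (s s' ρ : ℝ → ℝ)
    (hcont : ContinuousOn s {x : ℝ | l < (x : EReal) ∧ x ≤ y})
    (hmono : StrictMonoOn s {x : ℝ | l < (x : EReal) ∧ x ≤ y})
    (hderiv : ∀ x : ℝ, l < (x : EReal) → x < y → HasDerivAt s (s' x) x)
    (hs'cont : ContinuousOn s' {x : ℝ | l < (x : EReal) ∧ x < y})
    (hs'pos : ∀ x : ℝ, l < (x : EReal) → x < y → 0 < s' x)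
    (hρmeas : Measurable ρ)
    (hρpos : ∀ x : ℝ, l < (x : EReal) → x < y → 0 < ρ x)
    (hρint : ∀ z : ℝ, l < (z : EReal) → z < y →
      ∫⁻ u in Set.Ioo z y, ENNReal.ofReal (ρ u) < ⊤) :
    ∀ z : ℝ, l < (z : EReal) → z < y →
      (∫⁻ a in Set.Ioo z y,
          ENNReal.ofReal ((1 / (s y - s a) - 1 / (s y - s z)) * (s y - s a) ^ 2 * ρ a) < ⊤) ∧
      (∫⁻ a in Set.Ioo z y,
          ENNReal.ofReal ((∫ u in z..a, (s y - s u) ^ 2 * ρ u) * s' a / (s y - s a) ^ 2) = ⊤) := by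
  intro z hlz hzy
  have hl : ∀ {a : ℝ}, z ≤ a → l < (a : EReal) := fun h =>
    lt_of_lt_of_le hlz (EReal.coe_le_coe_iff.2 h)
  have hg : ∀ {a : ℝ}, z ≤ a → a < y → 0 < s y - s a := fun h1 h2 =>
    sub_pos.2 (hmono ⟨hl h1, h2.le⟩ ⟨hly, le_rfl⟩ h2)
  have hgz : ∀ {a : ℝ}, z ≤ a → a ≤ y → s z ≤ s a := fun h1 h2 =>
    hmono.monotoneOn ⟨hlz, hzy.le⟩ ⟨hl h1, h2⟩ h1
  have hz0 : 0 < s y - s z := hg le_rfl hzy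
  have hcz : ContinuousOn s (Icc z y) := hcont.mono fun x hx => ⟨hl hx.1, hx.2⟩
  have hρ : IntegrableOn ρ (Ioo z y) := by
    refine ⟨hρmeas.aestronglyMeasurable, ?_⟩
    rw [hasFiniteIntegral_iff_ofReal]
    · exact hρint z hlz hzy
    · filter_upwards [ae_restrict_mem measurableSet_Ioo] with a ha
      exact (hρpos a (hl ha.1.le) ha.2).le
  constructor
  · calc _ ≤ ∫⁻ a in Ioo z y, ENNReal.ofReal (s y - s z) * ENNReal.ofReal (ρ a) := by
          refine setLIntegral_mono' measurableSet_Ioo fun a ha => ?_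
          rw [← ENNReal.ofReal_mul hz0.le]
          apply ENNReal.ofReal_le_ofReal
          have ga := hg ha.1.le ha.2
          have hr := hρpos a (hl ha.1.le) ha.2
          apply mul_le_mul_of_nonneg_right _ hr.le
          have h1 : (1 / (s y - s a) - 1 / (s y - s z)) * (s y - s a) ^ 2
              = (s y - s a) - (s y - s a) ^ 2 / (s y - s z) := by
            field_simp
          have h2 : 0 ≤ (s y - s a) ^ 2 / (s y - s z) := by positivity
          linarith [hgz ha.1.le ha.2.le]
      _ = ENNReal.ofReal (s y - s z) * ∫⁻ a in Ioo z y, ENNReal.ofReal (ρ a) :=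
          lintegral_const_mul _ hρmeas.ennreal_ofReal
      _ < ⊤ := ENNReal.mul_lt_top ENNReal.ofReal_lt_top (hρint z hlz hzy)
  · obtain ⟨c, hzc, hcy⟩ := exists_between hzy
    have hmint : IntervalIntegrable (fun u => (s y - s u) ^ 2 * ρ u) volume z y := by
      have hρ' : IntervalIntegrable ρ volume z y :=
        (intervalIntegrable_iff_integrableOn_Ioo_of_le hzy.le).2 hρ
      refine hρ'.continuousOn_mul ?_
      rw [uIcc_of_le hzy.le]
      exact (continuousOn_const.sub hcz).pow 2
    have hsub : ∀ {a b : ℝ}, z ≤ a → a ≤ b → b ≤ y →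
        IntervalIntegrable (fun u => (s y - s u) ^ 2 * ρ u) volume a b := fun h1 h2 h3 =>
      hmint.mono_set (by
        rw [uIcc_of_le h2, uIcc_of_le hzy.le]
        exact Icc_subset_Icc h1 h3)
    set C := ∫ u in z..c, (s y - s u) ^ 2 * ρ u with hC
    have hCpos : 0 < C := by
      refine intervalIntegral.intervalIntegral_pos_of_pos_on (hsub le_rfl hzc.le hcy.le) ?_ hzc
      intro u hu
      have huy := hu.2.trans hcy
      exact mul_pos (pow_pos (hg hu.1.le huy) 2) (hρpos u (hl hu.1.le) huy)
    have hCle : ∀ a ∈ Ioo c y, C ≤ ∫ u in z..a, (s y - s u) ^ 2 * ρ u := by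
      intro a ha
      rw [← intervalIntegral.integral_add_adjacent_intervals (hsub le_rfl hzc.le hcy.le)
        (hsub hzc.le ha.1.le ha.2.le)]
      refine le_add_of_nonneg_right ?_
      refine intervalIntegral.integral_nonneg ha.1.le fun u hu => ?_
      exact mul_nonneg (sq_nonneg _)
        (hρpos u (hl (hzc.le.trans hu.1)) (hu.2.trans_lt ha.2)).le
    have hlow : ∀ a ∈ Ioo c y, 0 < s' a / (s y - s a) ^ 2 := fun a ha =>
      div_pos (hs'pos a (hl (hzc.trans ha.1).le) ha.2)
        (pow_pos (hg (hzc.trans ha.1).le ha.2) 2)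
    have hd : ∀ a ∈ Ioo c y,
        HasDerivAt (fun x => (s y - s x)⁻¹) (s' a / (s y - s a) ^ 2) a := by
      intro a ha
      have h := ((hderiv a (hl (hzc.trans ha.1).le) ha.2).const_sub (s y)).inv
        (hg (hzc.trans ha.1).le ha.2).ne'
      rw [neg_neg] at h
      exact h
    have hmem : Ioo c y ∈ 𝓝[<] y := Ioo_mem_nhdsLT hcy
    have hnot : ¬ IntegrableOn (fun a => s' a / (s y - s a) ^ 2) (Ioo c y) := by
      refine not_integrableOn_of_tendsto_norm_atTop_of_deriv_isBigO_filter
        (f := fun x => (s y - s x)⁻¹) (𝓝[<] y) hmem ?_ ?_ ?_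
      · filter_upwards [hmem] with a ha
        exact (hd a ha).differentiableAt
      · refine tendsto_norm_atTop_atTop.comp (tendsto_inv_nhdsGT_zero.comp ?_)
        refine tendsto_nhdsWithin_iff.2 ⟨?_, ?_⟩
        · have h1 : Tendsto s (𝓝[<] y) (𝓝 (s y)) := by
            have h2 := hcz y ⟨hzy.le, le_rfl⟩
            have h3 : 𝓝[<] y ≤ 𝓝[Icc z y] y := by
              rw [← nhdsWithin_Ioo_eq_nhdsLT hzy]
              exact nhdsWithin_mono _ Ioo_subset_Icc_self
            exact h2.mono_left h3
          simpa using h1.const_sub (s y)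
        · filter_upwards [hmem] with a ha
          exact hg (hzc.trans ha.1).le ha.2
      · refine Asymptotics.IsBigO.of_bound 1 ?_
        filter_upwards [hmem] with a ha
        rw [(hd a ha).deriv, one_mul]
    have hcontq : ContinuousOn (fun a => s' a / (s y - s a) ^ 2) (Ioo c y) := by
      refine ContinuousOn.div (hs'cont.mono fun x hx => ⟨hl (hzc.trans hx.1).le, hx.2⟩)
        ((continuousOn_const.sub
          (hcz.mono fun x hx => ⟨(hzc.trans hx.1).le, hx.2.le⟩)).pow 2) ?_
      intro a ha
      exact (pow_pos (hg (hzc.trans ha.1).le ha.2) 2).ne'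
    have htop : ∫⁻ a in Ioo c y, ENNReal.ofReal (s' a / (s y - s a) ^ 2) = ⊤ := by
      by_contra hne
      refine hnot ⟨hcontq.aestronglyMeasurable measurableSet_Ioo, ?_⟩
      rw [hasFiniteIntegral_iff_ofReal]
      · exact lt_top_iff_ne_top.2 hne
      · filter_upwards [ae_restrict_mem measurableSet_Ioo] with a ha
        exact (hlow a ha).le
    rw [← top_le_iff]
    calc (⊤ : ENNReal)
        = ENNReal.ofReal C * ∫⁻ a in Ioo c y, ENNReal.ofReal (s' a / (s y - s a) ^ 2) := by
          rw [htop, ENNReal.mul_top (ENNReal.ofReal_pos.2 hCpos).ne']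
      _ = ∫⁻ a in Ioo c y, ENNReal.ofReal C * ENNReal.ofReal (s' a / (s y - s a) ^ 2) :=
          (lintegral_const_mul' _ _ ENNReal.ofReal_ne_top).symm
      _ ≤ ∫⁻ a in Ioo c y, ENNReal.ofReal
            ((∫ u in z..a, (s y - s u) ^ 2 * ρ u) * s' a / (s y - s a) ^ 2) := by
          refine setLIntegral_mono' measurableSet_Ioo fun a ha => ?_
          rw [← ENNReal.ofReal_mul hCpos.le, mul_div_assoc]
          exact ENNReal.ofReal_le_ofReal
            (mul_le_mul_of_nonneg_right (hCle a ha) (hlow a ha).le)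
      _ ≤ _ := lintegral_mono_set (Ioo_subset_Ioo_left hzc.le)
end
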